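/- arXiv:math/0412354 — 2 statements merged into one kernel-verified Lean document; each statement's English description precedes it below -/
import Mathlib

section
/- For every quadratic (real-valued) primitive Dirichlet character χ of conductor k > 1, the Dirichlet L-function L(χ, ·), i.e., the meromorphic continuation to ℂ of s ↦ ∑_{n=1}^∞ χ(n) n^{−s}, is differentially transcendental: there do not exist n ∈ ℕ and a nonzero polynomial P ∈ ℂ[X₀, X₁, …, X_{n+1}] such that P(s, L(χ,s), L′(χ,s), …, L⁽ⁿ⁾(χ,s)) = 0 for every s ∈ ℂ at which L(χ, ·) is analytic. -/
/-- A function `f : ℂ → ℂ` (meromorphic on `ℂ`) is differentially algebraic over `ℂ(z)`: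
there are `n ∈ ℕ` and a nonzero polynomial `P ∈ ℂ[X₀, …, X_{n+1}]` such that
`P (z, f z, f' z, …, f⁽ⁿ⁾ z) = 0` at every point `z` where `f` is analytic. -/
def DifferentiallyAlgebraic (f : ℂ → ℂ) : Prop :=
  ∃ (n : ℕ) (P : MvPolynomial (Fin (n + 2)) ℂ),
    P ≠ 0 ∧ ∀ z : ℂ, AnalyticAt ℂ f z →
      MvPolynomial.eval
        (fun i : Fin (n + 2) => if i.val = 0 then z else iteratedDeriv (i.val - 1) f z) P = 0

/-!
An algebraic differential equation for a Dirichlet series becomes, coefficient by coefficient, a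
statement about the Dirichlet convolution ring, in which differentiation is the derivation
`f ↦ -log · f`.

Coefficients depending on the variable `s` are removed first. If `∑ sⁱ Lᵢ(s) = 0` for Dirichlet
series `Lᵢ`, then all `Lᵢ` vanish: if `m` is the least index at which some `Lᵢ` has a nonzero
coefficient `aᵢ`, then multiplying by `mˢ` and letting `s → ∞` shows that the polynomial
`∑ aᵢ sⁱ` tends to zero, as the remaining terms decay exponentially.

It remains to see that `f, f', f'', …` are algebraically independent over `ℂ` in the convolution
ring. By a Jacobian criterion it suffices that no nontrivial relation `∑ cⱼ * D_p f⁽ʲ⁾ = 0` holds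
simultaneously for all primes `p`, where `D_p` is multiplication by the `p`-adic valuation. At the
index `m p`, with `m` minimal such that some `cⱼ m ≠ 0`, such a relation reads
`f p * ∑ cⱼ m * (-log p)ʲ = 0`, so a nonzero polynomial would have infinitely many roots as soon as
`f` is nonzero at infinitely many primes; a Dirichlet character modulo `k` is nonzero at every prime
not dividing `k`.
-/

open Filter Topology Asymptotics MvPolynomial

section DerivationCriterion

variable {σ ι K R : Type*}

section Semiring

variable [CommSemiring K]

theorem totalDegree_pderiv_lt {P : MvPolynomial σ K} (hP : P.totalDegree ≠ 0) (i : σ) :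
    (pderiv i P).totalDegree < P.totalDegree := by
  rw [totalDegree, Finset.sup_lt_iff hP.bot_lt]
  intro m hm
  rw [mem_support_iff, coeff_pderiv] at hm
  have hle := le_totalDegree (mem_support_iff.mpr (left_ne_zero_of_mul hm))
  rw [Finsupp.sum_add_index' (fun _ ↦ rfl) (fun _ _ _ ↦ rfl), Finsupp.sum_single_index rfl] at hle
  exact hle

theorem totalDegree_eq_zero_of_pderiv_eq_zero [NoZeroDivisors K] [CharZero K]
    {P : MvPolynomial σ K} (hP : ∀ i, pderiv i P = 0) : P.totalDegree = 0 := by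
  refine (totalDegree_eq_zero_iff σ P).mpr fun m hm i ↦ by_contra fun hmi ↦ ?_
  have hcoeff := congrArg (coeff (m - Finsupp.single i 1)) (hP i)
  have hle : Finsupp.single i 1 ≤ m := Finsupp.single_le_iff.mpr (Nat.one_le_iff_ne_zero.mpr hmi)
  rw [coeff_pderiv, tsub_add_cancel_of_le hle, coeff_zero] at hcoeff
  exact mul_ne_zero (mem_support_iff.mp hm) (Nat.cast_add_one_ne_zero _) hcoeff

variable [CommSemiring R] [Algebra K R]

theorem derivation_aeval_eq_sum_pderiv (D : Derivation K R R) (g : σ → R) (P : MvPolynomial σ K) :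
    D (aeval g P) = ∑ i ∈ P.vars, aeval g (pderiv i P) * D (g i) := by
  classical
  have hsum : ∀ᶠ s : Finset σ in atTop,
      D (aeval g P) = ∑ i ∈ s, aeval g (pderiv i P) * D (g i) := by
    induction P using MvPolynomial.induction_on with
    | C a => simp
    | add p q hp hq =>
      filter_upwards [hp, hq] with s hps hqs
      simp only [map_add, hps, hqs, add_mul, Finset.sum_add_distrib]
    | mul_X p j hp =>
      filter_upwards [hp, eventually_ge_atTop {j}] with s hps hjs
      have hj : j ∈ s := Finset.singleton_subset_iff.mp hjs
      simp only [map_mul, aeval_X, Derivation.leibniz, smul_eq_mul, hps, map_add, pderiv_X,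
        add_mul, Finset.sum_add_distrib, Finset.mul_sum]
      congr 1
      · simp [Pi.single_apply, hj, apply_ite (aeval g), ite_mul]
      · exact Finset.sum_congr rfl fun i _ ↦ by ring
  obtain ⟨s, hs, hvars⟩ := (hsum.and (eventually_ge_atTop P.vars)).exists
  rw [hs]
  refine (Finset.sum_subset hvars fun i _ hi ↦ ?_).symm
  rw [pderiv_eq_zero_of_notMem_vars hi, map_zero, zero_mul]

end Semiring

theorem algebraicIndependent_of_linearIndependent_derivation [CommRing K] [NoZeroDivisors K]
    [CharZero K] [CommRing R] [Algebra K R] [FaithfulSMul K R] {g : σ → R}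
    (D : ι → Derivation K R R)
    (hD : LinearIndependent R fun (j : σ) (i : ι) ↦ D i (g j)) : AlgebraicIndependent K g := by
  have aeval_pderiv {P : MvPolynomial σ K} (hP : aeval g P = 0) (j : σ) :
      aeval g (pderiv j P) = 0 := by
    by_cases hj : j ∈ P.vars
    · refine linearIndependent_iff'.mp hD P.vars (fun j ↦ aeval g (pderiv j P)) ?_ j hj
      ext i
      simpa [hP] using (derivation_aeval_eq_sum_pderiv (D i) g P).symm
    · rw [pderiv_eq_zero_of_notMem_vars hj, map_zero]
  refine algebraicIndependent_iff.mpr fun P hP ↦ ?_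
  induction hd : P.totalDegree using Nat.strong_induction_on generalizing P with
  | _ d ih =>
    subst hd
    have hdeg : P.totalDegree = 0 := by
      by_contra hne
      exact hne <| totalDegree_eq_zero_of_pderiv_eq_zero fun j ↦
        ih _ (totalDegree_pderiv_lt hne j) _ (aeval_pderiv hP j) rfl
    rw [totalDegree_eq_zero_iff_eq_C.mp hdeg, aeval_C] at hP
    rw [totalDegree_eq_zero_iff_eq_C.mp hdeg,
      (FaithfulSMul.algebraMap_eq_zero_iff K R).mp hP, map_zero]

end DerivationCriterion

section ArithmeticDerivations

theorem arithmeticFunction_sum_apply {ι M : Type*} [AddCommMonoid M] (s : Finset ι)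
    (F : ι → ArithmeticFunction M) (n : ℕ) : (∑ i ∈ s, F i) n = ∑ i ∈ s, F i n :=
  map_sum (⟨⟨fun f ↦ f n, rfl⟩, fun _ _ ↦ rfl⟩ : ArithmeticFunction M →+ M) F s

theorem eq_zero_of_sum_monomial_eq_zero {R : Type*} [Semiring R] {s : Finset ℕ} {a : ℕ → R}
    (h : ∑ j ∈ s, Polynomial.monomial j (a j) = 0) : ∀ j ∈ s, a j = 0 := by
  intro j hj
  simpa [Polynomial.finsetSum_coeff, Polynomial.coeff_monomial, hj]
    using congrArg (Polynomial.coeff · j) h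

variable {R : Type*} [CommRing R]

/-- The derivation `f ↦ v · f` of the ring of arithmetic functions under Dirichlet convolution, for
a function `v` which is additive on products of nonzero numbers. -/
noncomputable def additiveDerivation (v : ℕ → R)
    (hv : ∀ a b, a ≠ 0 → b ≠ 0 → v (a * b) = v a + v b) :
    Derivation R (ArithmeticFunction R) (ArithmeticFunction R) :=
  .mk'
    { toFun f := ⟨fun n ↦ v n * f n, by simp⟩
      map_add' f g := ArithmeticFunction.ext fun n ↦ mul_add (v n) (f n) (g n)
      map_smul' c f := ArithmeticFunction.ext fun n ↦ mul_left_comm (v n) c (f n) }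
    fun f g ↦ by
      ext n
      change v n * (f * g) n = _
      simp only [smul_eq_mul, mul_comm g, ArithmeticFunction.add_apply,
        ArithmeticFunction.mul_apply, Finset.mul_sum, ← Finset.sum_add_distrib]
      refine Finset.sum_congr rfl fun ⟨a, b⟩ hab ↦ ?_
      obtain ⟨rfl, hn⟩ := Nat.mem_divisorsAntidiagonal.mp hab
      change v (a * b) * (f a * g b) = f a * (v b * g b) + v a * f a * g b
      rw [hv a b (left_ne_zero_of_mul hn) (right_ne_zero_of_mul hn)]
      ring

variable (R) in
/-- The derivation `f ↦ v_p · f` of arithmetic functions, with `v_p` the `p`-adic valuation. It is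
the partial derivative in `X_p` when an arithmetic function is read as a power series in variables
`X_p` indexed by the primes, followed by multiplication by `X_p`. For `p` not prime it is zero. -/
noncomputable def primeDerivation (p : ℕ) :
    Derivation R (ArithmeticFunction R) (ArithmeticFunction R) :=
  additiveDerivation (fun n ↦ (n.factorization p : R)) fun a b ha hb ↦ by
    simp [Nat.factorization_mul ha hb]

/-- The derivation `f ↦ -log · f` of arithmetic functions, which corresponds to differentiating
the L-series of `f`. -/
noncomputable def logDerivation :
    Derivation ℂ (ArithmeticFunction ℂ) (ArithmeticFunction ℂ) :=
  additiveDerivation (fun n ↦ -Complex.log n) fun a b ha hb ↦ by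
    have hlog := Real.log_mul (Nat.cast_ne_zero.mpr ha) (Nat.cast_ne_zero.mpr hb)
    simp only [← Complex.natCast_log]
    rw [Nat.cast_mul, hlog, Complex.ofReal_add, neg_add]

theorem primeDerivation_apply (p : ℕ) (f : ArithmeticFunction R) (n : ℕ) :
    primeDerivation R p f n = n.factorization p * f n :=
  rfl

theorem logDerivation_iterate_apply (f : ArithmeticFunction ℂ) (j n : ℕ) :
    (logDerivation^[j] f) n = (-Complex.log n) ^ j * f n := by
  induction j with
  | zero => simp
  | succ j ih =>
    rw [Function.iterate_succ_apply', pow_succ', mul_assoc, ← ih]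
    rfl

theorem mul_primeDerivation_apply_mul {p m : ℕ} (hp : p.Prime) (hm : m ≠ 0)
    {f : ArithmeticFunction R} (hf : ∀ a < m, f a = 0) (g : ArithmeticFunction R) :
    (f * primeDerivation R p g) (m * p) = f m * g p := by
  rw [ArithmeticFunction.mul_apply, Finset.sum_eq_single_of_mem (m, p)]
  · simp [primeDerivation_apply, hp.factorization]
  · simp [hm, hp.ne_zero]
  rintro ⟨a, b⟩ hab hne
  obtain ⟨hmul, -⟩ := Nat.mem_divisorsAntidiagonal.mp hab
  by_cases hpb : p ∣ b
  · obtain ⟨c, rfl⟩ := hpb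
    have hac : a * c = m := Nat.eq_of_mul_eq_mul_right hp.pos (by rw [← hmul]; ring)
    have ham : a ≠ m := by
      rintro rfl
      exact hne (by simp [mul_eq_left₀ hm |>.mp hac])
    rw [hf a (lt_of_le_of_ne (Nat.le_of_dvd hm.bot_lt ⟨c, hac.symm⟩) ham), zero_mul]
  · simp [primeDerivation_apply, Nat.factorization_eq_zero_of_not_dvd hpb]

theorem injOn_neg_log_natCast : Set.InjOn (fun n : ℕ ↦ -Complex.log n) {n | n ≠ 0} := by
  intro a ha b hb hab
  simpa [Complex.exp_log (Nat.cast_ne_zero.mpr ha), Complex.exp_log (Nat.cast_ne_zero.mpr hb)]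
    using congrArg Complex.exp (neg_injective hab)

theorem linearIndependent_primeDerivation_logDerivation_iterate {f : ArithmeticFunction ℂ}
    (hf : {p : ℕ | p.Prime ∧ f p ≠ 0}.Infinite) :
    LinearIndependent (ArithmeticFunction ℂ)
      fun (j p : ℕ) ↦ primeDerivation ℂ p (logDerivation^[j] f) := by
  refine linearIndependent_iff'.mpr fun s c hc ↦ ?_
  suffices h : ∀ m, ∀ j ∈ s, c j m = 0 from fun j hj ↦ ArithmeticFunction.ext fun m ↦ h m j hj
  intro m
  induction m using Nat.strong_induction_on with
  | _ m ih =>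
    rcases eq_or_ne m 0 with rfl | hm
    · simp
    have root_neg_log (p : ℕ) (hp : p.Prime) (hfp : f p ≠ 0) :
        (∑ j ∈ s, Polynomial.monomial j (c j m)).IsRoot (-Complex.log p) := by
      have hsum : (∑ j ∈ s, c j m * (-Complex.log p) ^ j) * f p = 0 := calc
        _ = ∑ j ∈ s, (c j * primeDerivation ℂ p (logDerivation^[j] f)) (m * p) := by
          rw [Finset.sum_mul]
          refine Finset.sum_congr rfl fun j hj ↦ ?_
          rw [mul_primeDerivation_apply_mul hp hm (fun a ha ↦ ih a ha j hj),
            logDerivation_iterate_apply, mul_assoc]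
        _ = (∑ j ∈ s, c j * primeDerivation ℂ p (logDerivation^[j] f)) (m * p) :=
          (arithmeticFunction_sum_apply ..).symm
        _ = 0 := by
          simpa using congrArg (· (m * p)) (congrFun hc p)
      simpa [Polynomial.eval_finsetSum] using (mul_eq_zero.mp hsum).resolve_right hfp
    refine eq_zero_of_sum_monomial_eq_zero (Polynomial.eq_zero_of_infinite_isRoot _ ?_)
    refine (hf.image (injOn_neg_log_natCast.mono fun p hp ↦ hp.1.ne_zero)).mono ?_
    rintro _ ⟨p, ⟨hp, hfp⟩, rfl⟩
    exact root_neg_log p hp hfp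

theorem algebraicIndependent_logDerivation_iterate {f : ArithmeticFunction ℂ}
    (hf : {p : ℕ | p.Prime ∧ f p ≠ 0}.Infinite) :
    AlgebraicIndependent ℂ fun j : ℕ ↦ logDerivation^[j] f :=
  have : FaithfulSMul ℂ (ArithmeticFunction ℂ) := by
    refine (faithfulSMul_iff_algebraMap_injective ..).mpr fun a b hab ↦ ?_
    simpa using congrArg (· 1) hab
  algebraicIndependent_of_linearIndependent_derivation (primeDerivation ℂ)
    (linearIndependent_primeDerivation_logDerivation_iterate hf)

end ArithmeticDerivations

section LSeries

open LSeries

theorem abscissaOfAbsConv_update (f : ℕ → ℂ) (n : ℕ) (a : ℂ) :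
    abscissaOfAbsConv (Function.update f n a) = abscissaOfAbsConv f :=
  abscissaOfAbsConv_congr' <| (eventually_ne_atTop n).mono fun _ hm ↦
    Function.update_of_ne hm a f

theorem LSeries_eq_term_add_LSeries_update {f : ℕ → ℂ} {s : ℂ} (hf : LSeriesSummable f s)
    (n : ℕ) : LSeries f s = term f s n + LSeries (Function.update f n 0) s := by
  rw [LSeries, hf.tsum_eq_add_tsum_ite n]
  congr 1
  refine tsum_congr fun m ↦ ?_
  by_cases hm : m = n <;> simp [term, hm]

theorem superpolynomialDecay_pow {𝕜 : Type*} [RCLike 𝕜] {r : 𝕜} (hr : ‖r‖ < 1) :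
    SuperpolynomialDecay atTop (fun t : ℕ ↦ (t : 𝕜)) fun t ↦ r ^ t := fun i ↦ by
  refine tendsto_zero_iff_norm_tendsto_zero.mpr ?_
  simpa using tendsto_pow_const_mul_const_pow_of_lt_one i (norm_nonneg r) hr

theorem eventually_LSeriesSummable_natCast {f : ℕ → ℂ} (hf : abscissaOfAbsConv f < ⊤) :
    ∀ᶠ t : ℕ in atTop, LSeriesSummable f t := by
  obtain ⟨x, hx, -⟩ := EReal.lt_iff_exists_real_btwn.mp hf
  filter_upwards [tendsto_natCast_atTop_atTop.eventually_gt_atTop x] with t ht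
  exact LSeriesSummable_of_abscissaOfAbsConv_lt_re (hx.trans (by simpa using mod_cast ht))

theorem superpolynomialDecay_pow_mul_LSeries_sub {f : ℕ → ℂ} (hf : abscissaOfAbsConv f < ⊤)
    {n : ℕ} (hn : ∀ m ≤ n, f m = 0) :
    SuperpolynomialDecay atTop (fun t : ℕ ↦ (t : ℂ))
      fun t ↦ (n + 1) ^ t * LSeries f t - f (n + 1) := by
  set g := Function.update f (n + 1) 0
  have hg : ∀ m ≤ n + 1, g m = 0 := fun m hm ↦ by
    rcases hm.eq_or_lt with rfl | hlt
    · simp [g]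
    · simpa [g, hlt.ne] using hn m (Nat.lt_succ_iff.mp hlt)
  have hlim : Tendsto (fun t : ℕ ↦ ((n : ℂ) + 2) ^ t * LSeries g t) atTop
      (𝓝 (g (n + 2))) := by
    refine ((tendsto_cpow_mul_atTop hg ((abscissaOfAbsConv_update ..).trans_lt hf)).comp
      tendsto_natCast_atTop_atTop).congr fun t ↦ ?_
    simp [add_assoc, one_add_one_eq_two]
  have hratio : ‖((n + 1 : ℕ) / (n + 2 : ℕ) : ℂ)‖ < 1 := by
    rw [norm_div, Complex.norm_natCast, Complex.norm_natCast, div_lt_one (by positivity)]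
    exact_mod_cast Nat.lt_succ_self (n + 1)
  have hdecay : SuperpolynomialDecay atTop (fun t : ℕ ↦ (t : ℂ))
      fun t ↦ ((n + 1 : ℕ) / (n + 2 : ℕ) : ℂ) ^ t * (((n : ℂ) + 2) ^ t * LSeries g t) :=
    fun i ↦ by simpa [mul_assoc] using (superpolynomialDecay_pow hratio i).mul hlim
  refine hdecay.congr' ?_
  filter_upwards [eventually_LSeriesSummable_natCast hf] with t ht
  have h₁ : (n : ℂ) + 1 ≠ 0 := by exact_mod_cast n.succ_ne_zero
  have h₂ : (n : ℂ) + 2 ≠ 0 := by exact_mod_cast (n + 1).succ_ne_zero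
  rw [LSeries_eq_term_add_LSeries_update ht (n + 1), term_of_ne_zero n.succ_ne_zero]
  push_cast
  rw [Complex.cpow_natCast, div_pow]
  field_simp
  ring

theorem polynomial_eq_zero_of_tendsto_eval_natCast_zero {𝕜 : Type*} [RCLike 𝕜] {q : Polynomial 𝕜}
    (hq : Tendsto (fun t : ℕ ↦ q.eval (t : 𝕜)) atTop (𝓝 0)) : q = 0 := by
  have hdeg : q.degree ≤ 0 := by
    by_contra! hpos
    refine not_tendsto_nhds_of_tendsto_atTop (q.tendsto_norm_atTop hpos ?_) _ hq.norm
    simpa using tendsto_natCast_atTop_atTop (R := ℝ)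
  rw [Polynomial.eq_C_of_degree_le_zero hdeg] at hq ⊢
  simp only [Polynomial.eval_C, tendsto_const_nhds_iff] at hq
  rw [hq, map_zero]

theorem eq_zero_of_eventually_sum_pow_mul_LSeries_eq_zero {s : Finset ℕ}
    {f : ℕ → ArithmeticFunction ℂ} (hf : ∀ i ∈ s, abscissaOfAbsConv (f i) < ⊤)
    (h : ∀ᶠ t : ℕ in atTop, ∑ i ∈ s, (t : ℂ) ^ i * LSeries (f i) t = 0) :
    ∀ i ∈ s, f i = 0 := by
  suffices hcoeff : ∀ n, ∀ i ∈ s, f i n = 0 from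
    fun i hi ↦ ArithmeticFunction.ext fun n ↦ hcoeff n i hi
  intro m
  induction m using Nat.strong_induction_on with
  | _ m ih =>
    rcases m with _ | n
    · simp
    refine eq_zero_of_sum_monomial_eq_zero
      (polynomial_eq_zero_of_tendsto_eval_natCast_zero ?_)
    have hdecay := tendsto_finsetSum s fun i hi ↦ superpolynomialDecay_pow_mul_LSeries_sub
      (hf i hi) (fun m hm ↦ ih m (Nat.lt_succ_of_le hm) i hi) i
    rw [Finset.sum_const_zero] at hdecay
    rw [← neg_zero]
    refine hdecay.neg.congr' ?_
    filter_upwards [h] with t ht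
    calc -∑ i ∈ s, (t : ℂ) ^ i * ((n + 1) ^ t * LSeries (f i) t - f i (n + 1))
      _ = ∑ i ∈ s, f i (n + 1) * t ^ i - (n + 1) ^ t * ∑ i ∈ s, t ^ i * LSeries (f i) t := by
        rw [Finset.mul_sum, ← Finset.sum_sub_distrib, ← Finset.sum_neg_distrib]
        exact Finset.sum_congr rfl fun i _ ↦ by ring
      _ = (∑ i ∈ s, Polynomial.monomial i (f i (n + 1))).eval (t : ℂ) := by
        simp [ht, Polynomial.eval_finsetSum]

theorem LSeriesHasSum_aeval {σ : Type*} {g : σ → ArithmeticFunction ℂ} {s : ℂ}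
    (hg : ∀ i, LSeriesSummable (g i) s) (P : MvPolynomial σ ℂ) :
    LSeriesHasSum (aeval g P : ArithmeticFunction ℂ) s (eval (fun i ↦ LSeries (g i) s) P) := by
  induction P using MvPolynomial.induction_on with
  | C a =>
    rw [aeval_C, eval_C, Algebra.algebraMap_eq_smul_one]
    refine (hasSum_ite_eq 1 a).congr_fun fun n ↦ ?_
    by_cases hn : n = 1 <;> simp [term_def, hn]
  | add P Q hP hQ => simpa only [map_add] using! hP.add hQ
  | mul_X P i hP =>
    simpa only [map_mul, aeval_X, eval_X] using!
      ArithmeticFunction.LSeriesHasSum_mul hP (hg i).LSeriesHasSum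

theorem coe_logDerivation_iterate (f : ArithmeticFunction ℂ) (j : ℕ) :
    ⇑(logDerivation^[j] f) = (-1 : ℂ) ^ j • logMul^[j] f := by
  induction j with
  | zero => simp
  | succ j ih =>
    ext n
    rw [Function.iterate_succ_apply', Function.iterate_succ_apply']
    change -Complex.log n * (logDerivation^[j] f) n = _
    simp only [ih, Pi.smul_apply, smul_eq_mul, logMul]
    ring

theorem LSeriesSummable_logDerivation_iterate {f : ArithmeticFunction ℂ} {s : ℂ}
    (hs : abscissaOfAbsConv f < s.re) (j : ℕ) : LSeriesSummable (logDerivation^[j] f) s := by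
  rw [coe_logDerivation_iterate]
  refine LSeriesSummable.smul _ (LSeriesSummable_of_abscissaOfAbsConv_lt_re ?_)
  rwa [absicssaOfAbsConv_logPowMul]

theorem LSeries_logDerivation_iterate {f : ArithmeticFunction ℂ} {s : ℂ}
    (hs : abscissaOfAbsConv f < s.re) (j : ℕ) :
    LSeries (logDerivation^[j] f) s = iteratedDeriv j (LSeries f) s := by
  rw [coe_logDerivation_iterate, LSeries_smul, LSeries_iteratedDeriv j hs]

theorem eval_cons_eq_sum_pow_mul_LSeries_aeval {n : ℕ} {g : Fin n → ArithmeticFunction ℂ} {s : ℂ}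
    (hg : ∀ j, LSeriesSummable (g j) s) (P : MvPolynomial (Fin (n + 1)) ℂ) :
    eval (Fin.cons s fun j ↦ LSeries (g j) s : Fin (n + 1) → ℂ) P =
      ∑ i ∈ (finSuccEquiv ℂ n P).support,
        s ^ i * LSeries (aeval g ((finSuccEquiv ℂ n P).coeff i) : ArithmeticFunction ℂ) s := by
  rw [eval_eq_eval_mv_eval', Polynomial.eval_map, Polynomial.eval₂_eq_sum, Polynomial.sum_def]
  refine Finset.sum_congr rfl fun i _ ↦ ?_
  rw [(LSeriesHasSum_aeval hg _).LSeries_eq, mul_comm]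

theorem eq_zero_of_eval_cons_LSeries_eq_zero {n : ℕ}
    {g : Fin n → ArithmeticFunction ℂ} (hind : AlgebraicIndependent ℂ g)
    {x : ℝ} (hg : ∀ s : ℂ, x < s.re → ∀ j, LSeriesSummable (g j) s)
    {P : MvPolynomial (Fin (n + 1)) ℂ}
    (hP : ∀ s : ℂ, x < s.re → eval (Fin.cons s fun j ↦ LSeries (g j) s : Fin (n + 1) → ℂ) P = 0) :
    P = 0 := by
  have hcoeff : ∀ i ∈ (finSuccEquiv ℂ n P).support,
      aeval g ((finSuccEquiv ℂ n P).coeff i) = 0 := by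
    refine eq_zero_of_eventually_sum_pow_mul_LSeries_eq_zero (fun i _ ↦ ?_) ?_
    · have hsum := LSeriesHasSum_aeval (hg (x + 1 : ℝ) (by simp)) ((finSuccEquiv ℂ n P).coeff i)
      exact hsum.LSeriesSummable.abscissaOfAbsConv_le.trans_lt (EReal.coe_lt_top _)
    · filter_upwards [tendsto_natCast_atTop_atTop.eventually_gt_atTop x] with t ht
      have hre : x < (t : ℂ).re := by simpa using ht
      rw [← eval_cons_eq_sum_pow_mul_LSeries_aeval (hg t hre), hP t hre]
  refine (finSuccEquiv ℂ n).injective (Polynomial.ext fun i ↦ ?_)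
  rw [map_zero, Polynomial.coeff_zero]
  by_contra hi
  exact hi (algebraicIndependent_iff.mp hind _ (hcoeff i (Polynomial.mem_support_iff.mpr hi)))

theorem not_differentiallyAlgebraic_of_eqOn_LSeries {F : ℂ → ℂ} {f : ArithmeticFunction ℂ} {x : ℝ}
    (hx : abscissaOfAbsConv f ≤ x) (hF : Set.EqOn F (LSeries f) {s | x < s.re})
    (hf : {p : ℕ | p.Prime ∧ f p ≠ 0}.Infinite) : ¬ DifferentiallyAlgebraic F := by
  rintro ⟨n, P, hP0, hP⟩
  have abscissa_lt {s : ℂ} (hs : x < s.re) : abscissaOfAbsConv f < s.re :=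
    hx.trans_lt (EReal.coe_lt_coe_iff.mpr hs)
  have hind := (algebraicIndependent_logDerivation_iterate hf).comp _
    (Fin.val_injective (n := n + 1))
  refine hP0 (eq_zero_of_eval_cons_LSeries_eq_zero hind (x := x)
    (fun s hs j ↦ LSeriesSummable_logDerivation_iterate (abscissa_lt hs) j) fun s hs ↦ ?_)
  have heq : F =ᶠ[𝓝 s] LSeries f :=
    hF.eventuallyEq_of_mem ((isOpen_lt continuous_const Complex.continuous_re).mem_nhds hs)
  rw [← hP s ((LSeries_analyticOnNhd f s (abscissa_lt hs)).congr heq.symm)]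
  refine congrArg (eval · P) (funext fun i ↦ ?_)
  cases i using Fin.cases <;>
    simp [heq.iteratedDeriv_eq, LSeries_logDerivation_iterate (abscissa_lt hs)]

end LSeries

theorem infinite_setOf_prime_dirichletCharacter_ne_zero {R : Type*} [CommMonoidWithZero R]
    [Nontrivial R] {k : ℕ} [NeZero k] (χ : DirichletCharacter R k) :
    {p : ℕ | p.Prime ∧ χ p ≠ 0}.Infinite := by
  refine Set.infinite_of_forall_exists_gt fun n ↦ ?_
  obtain ⟨p, hle, hp⟩ := Nat.exists_infinite_primes (max n k + 1)
  obtain ⟨hnp, hkp⟩ := max_lt_iff.mp (Nat.lt_of_succ_le hle)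
  have hcoprime : p.Coprime k := Nat.coprime_of_lt_prime (NeZero.ne k) hkp hp
  exact ⟨p, ⟨hp, (((ZMod.isUnit_iff_coprime p k).mpr hcoprime).map χ).ne_zero⟩, hnp⟩

theorem dirichletLFunction_diffTranscendental_general {k : ℕ} [NeZero k]
    (χ : DirichletCharacter ℂ k) : ¬ DifferentiallyAlgebraic (DirichletCharacter.LFunction χ) := by
  have hcoe {n : ℕ} (hn : n ≠ 0) : toArithmeticFunction (χ ·) n = χ n :=
    (χ.apply_eq_toArithmeticFunction_apply hn).symm
  have habs : LSeries.abscissaOfAbsConv (toArithmeticFunction (χ ·)) ≤ (1 : ℝ) :=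
    mod_cast LSeries.abscissaOfAbsConv_le_of_le_const (f := toArithmeticFunction (χ ·))
      ⟨1, fun n hn ↦ by simpa only [hcoe hn] using χ.norm_le_one n⟩
  refine not_differentiallyAlgebraic_of_eqOn_LSeries habs (fun s hs ↦ ?_) ?_
  · rw [χ.LFunction_eq_LSeries hs]
    exact LSeries_congr (fun hn ↦ (hcoe hn).symm) s
  · refine (infinite_setOf_prime_dirichletCharacter_ne_zero χ).mono ?_
    rintro p ⟨hp, hχ⟩
    exact ⟨hp, by rwa [hcoe hp.ne_zero]⟩

/-- For every quadratic (real-valued) primitive Dirichlet character `χ` of conductor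
`k > 1`, the Dirichlet L-function `L(χ, ·)` is differentially transcendental. -/
theorem dirichletLFunction_diffTranscendental (k : ℕ) [NeZero k] (hk : 1 < k)
    (χ : DirichletCharacter ℂ k)
    (hquad : ∀ a : ZMod k, χ a = -1 ∨ χ a = 0 ∨ χ a = 1)
    (hprim : χ.IsPrimitive) :
    ¬ DifferentiallyAlgebraic (DirichletCharacter.LFunction χ) := by
  exact dirichletLFunction_diffTranscendental_general χ
end

section
/- Every function K : ℂ → ℂ meromorphic on ℂ satisfying the functional equation K(z) − K(z−1) = Γ(z) for every z ∈ ℂ at which K(z), K(z−1), and Γ(z) are all analytic, is differentially transcendental. In particular, Kurepa's function, the meromorphic continuation of K(z) = ∫₀^∞ e^{−t} (t^z − 1)/(t − 1) dt, is differentially transcendental. -/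
/-!
In the field of meromorphic functions, `K` differentially algebraic means that `K, K', K'', …`
generate an extension of finite transcendence degree, a property inherited by
`Γ(z) = K(z) - K(z - 1)` and by its logarithmic derivative `ψ`. But `ψ, ψ', ψ'', …` are
algebraically independent: they satisfy `ψ⁽ⁿ⁾(z + 1) = ψ⁽ⁿ⁾(z) + (1/z)⁽ⁿ⁾`, so by the additive case
of Kolchin's theorem a dependence over `ℂ(z)` would make some nonzero combination
`∑ cₙ z⁻ⁿ⁻¹` with constant coefficients equal to `g(z) - g(z + 1)` for a rational `g`.
Such a difference has at least two poles among the integers, or none.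
-/

section DerivationClosure

open Algebra Polynomial

theorem exists_aeval_eq_zero_aeval_derivative_ne_zero {A B : Type*} [CommRing A] [IsDomain A]
    [CharZero A] [CommRing B] [Algebra A B] [FaithfulSMul A B] {b : B} (hb : IsAlgebraic A b) :
    ∃ p : A[X], aeval b p = 0 ∧ aeval b p.derivative ≠ 0 := by
  let relations : Set A[X] := {p | p ≠ 0 ∧ aeval b p = 0}
  let p := Function.argminOn natDegree relations hb
  obtain ⟨hp, hpb⟩ : p ∈ relations := Function.argminOn_mem natDegree relations hb
  have hdeg : p.natDegree ≠ 0 := fun h ↦ by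
    rw [eq_C_of_natDegree_eq_zero h] at hp hpb
    simp_all
  refine ⟨p, hpb, fun hp' ↦ (natDegree_derivative_lt hdeg).not_ge ?_⟩
  exact Function.argminOn_le natDegree relations
    ⟨fun h ↦ hdeg (derivative_eq_zero.1 h), hp'⟩

variable {F R : Type*} [Field F] [CommRing R] [Algebra F R] {D : Derivation F R R} {s t : Set R}

theorem derivation_aeval_eq_add_derivative (A : Subalgebra F R) (a : R) (p : A[X]) :
    D (aeval a p) = p.sum (fun n c ↦ a ^ n * D c) + aeval a p.derivative * D a := by
  induction p using Polynomial.induction_on' with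
  | add p q hp hq =>
    rw [Polynomial.sum_add_index _ _ _ (by simp) (by simp [mul_add])]
    simp only [map_add, hp, hq]
    ring
  | monomial n c =>
    rw [sum_monomial_index _ _ (by simp), derivative_monomial, aeval_monomial, aeval_monomial,
      D.leibniz, D.leibniz_pow]
    simp only [smul_eq_mul, nsmul_eq_mul, map_mul, map_natCast, Subalgebra.algebraMap_apply]
    ring

variable [IsDomain R]

theorem isAlgebraic_adjoin_mono (hst : s ⊆ t) {a : R} (ha : IsAlgebraic (adjoin F s) a) :
    IsAlgebraic (adjoin F t) a :=
  ha.adjoin_of_forall_isAlgebraic fun _ hx ↦ absurd (hst hx.1) hx.2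

theorem isAlgebraic_adjoin_of_mem {a : R} (ha : a ∈ adjoin F s) : IsAlgebraic (adjoin F s) a :=
  isAlgebraic_algebraMap (⟨a, ha⟩ : adjoin F s)

theorem isAlgebraic_derivation_of_mem_adjoin (hs : ∀ a ∈ s, IsAlgebraic (adjoin F s) (D a))
    {a : R} (ha : a ∈ adjoin F s) : IsAlgebraic (adjoin F s) (D a) := by
  induction ha using Algebra.adjoin_induction with
  | mem x hx => exact hs x hx
  | algebraMap r => simpa using isAlgebraic_zero
  | add x y _ _ ihx ihy => exact map_add D x y ▸ ihx.add ihy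
  | mul x y hx hy ihx ihy =>
    rw [D.leibniz, smul_eq_mul, smul_eq_mul]
    exact ((isAlgebraic_adjoin_of_mem hx).mul ihy).add ((isAlgebraic_adjoin_of_mem hy).mul ihx)

theorem isAlgebraic_aeval {A : Subalgebra F R} {a : R} (ha : IsAlgebraic A a) (p : A[X]) :
    IsAlgebraic A (aeval a p) :=
  (Algebra.adjoin_le (Set.singleton_subset_iff.2 ha) :
    adjoin A {a} ≤ Subalgebra.algebraicClosure A R) (aeval_mem_adjoin_singleton A a)

variable [CharZero F]

theorem isAlgebraic_derivation (hs : ∀ a ∈ s, IsAlgebraic (adjoin F s) (D a)) {a : R}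
    (ha : IsAlgebraic (adjoin F s) a) : IsAlgebraic (adjoin F s) (D a) := by
  have : CharZero (adjoin F s) :=
    charZero_of_injective_algebraMap (algebraMap F (adjoin F s)).injective
  obtain ⟨p, hpa, hp'⟩ := exists_aeval_eq_zero_aeval_derivative_ne_zero ha
  have hcoeff : IsAlgebraic (adjoin F s) (p.sum fun n c ↦ a ^ n * D c) :=
    Subalgebra.sum_mem (Subalgebra.algebraicClosure (adjoin F s) R) fun n _ ↦
      (ha.pow n).mul (isAlgebraic_derivation_of_mem_adjoin hs (p.coeff n).2)
  have hrel := derivation_aeval_eq_add_derivative (D := D) _ a p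
  rw [hpa, map_zero] at hrel
  refine IsAlgebraic.of_mul (mem_nonZeroDivisors_of_ne_zero hp') (isAlgebraic_aeval ha _) ?_
  rw [eq_neg_of_add_eq_zero_right hrel.symm]
  exact hcoeff.neg

theorem isAlgebraic_derivation_iterate (hs : ∀ a ∈ s, IsAlgebraic (adjoin F s) (D a)) {a : R}
    (ha : IsAlgebraic (adjoin F s) a) (n : ℕ) : IsAlgebraic (adjoin F s) (D^[n] a) := by
  induction n with
  | zero => exact ha
  | succ n ih => exact Function.iterate_succ_apply' D n a ▸ isAlgebraic_derivation hs ih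

end DerivationClosure

section IsDAlgebraic

open Algebra

variable {F M : Type*} [Field F] [Field M] [Algebra F M]

/-- `a` is differentially algebraic over the constant field `F`, in the form of finite
transcendence degree: all its derivatives are algebraic over one finitely generated extension. -/
def IsDAlgebraic (D : Derivation F M M) (a : M) : Prop :=
  ∃ s : Set M, s.Finite ∧ ∀ n, IsAlgebraic (adjoin F s) (D^[n] a)

namespace IsDAlgebraic

variable {D : Derivation F M M} {a b : M}

theorem sub (ha : IsDAlgebraic D a) (hb : IsDAlgebraic D b) : IsDAlgebraic D (a - b) := by
  obtain ⟨s, hs, has⟩ := ha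
  obtain ⟨t, ht, hbt⟩ := hb
  refine ⟨s ∪ t, hs.union ht, fun n ↦ ?_⟩
  rw [iterate_map_sub]
  exact (isAlgebraic_adjoin_mono Set.subset_union_left (has n)).sub
    (isAlgebraic_adjoin_mono Set.subset_union_right (hbt n))

theorem map {τ : M →ₐ[F] M} (hτ : ∀ x, D (τ x) = τ (D x)) (ha : IsDAlgebraic D a) :
    IsDAlgebraic D (τ a) := by
  obtain ⟨s, hs, has⟩ := ha
  refine ⟨τ '' s, hs.image τ, fun n ↦ ?_⟩
  have hcomm : Function.Semiconj τ D D := fun x ↦ (hτ x).symm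
  rw [← (hcomm.iterate_right n).eq a]
  have hmem (x : adjoin F s) : τ x ∈ adjoin F (τ '' s) :=
    AlgHom.map_adjoin τ s ▸ Subalgebra.mem_map.2 ⟨x, x.2, rfl⟩
  let τs : adjoin F s →ₐ[F] adjoin F (τ '' s) := (τ.comp (adjoin F s).val).codRestrict _ hmem
  have hτs : Function.Injective τs := fun x y hxy ↦
    Subtype.ext (τ.injective (congrArg Subtype.val hxy))
  exact (has n).ringHom_of_comp_eq τs.toRingHom τ.toRingHom hτs rfl

variable [CharZero F]

theorem of_isAlgebraic_adjoin (ha : IsDAlgebraic D a)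
    (hb : IsAlgebraic (adjoin F (Set.range fun n ↦ D^[n] a)) b) : IsDAlgebraic D b := by
  obtain ⟨s, hs, has⟩ := ha
  have hstable : ∀ x ∈ Set.range fun n ↦ D^[n] a,
      IsAlgebraic (adjoin F (Set.range fun n ↦ D^[n] a)) (D x) := by
    rintro _ ⟨n, rfl⟩
    exact isAlgebraic_adjoin_of_mem
      (subset_adjoin ⟨n + 1, Function.iterate_succ_apply' D n a⟩)
  refine ⟨s, hs, fun n ↦
    (isAlgebraic_derivation_iterate hstable hb n).adjoin_of_forall_isAlgebraic ?_⟩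
  rintro _ ⟨⟨m, rfl⟩, -⟩
  exact has m

theorem logDeriv (ha : IsDAlgebraic D a) : IsDAlgebraic D (D a / a) := by
  have hmem (n : ℕ) : IsAlgebraic (adjoin F (Set.range fun n ↦ D^[n] a)) (D^[n] a) :=
    isAlgebraic_adjoin_of_mem (subset_adjoin ⟨n, rfl⟩)
  exact ha.of_isAlgebraic_adjoin (div_eq_mul_inv (D a) a ▸ (hmem 1).mul (hmem 0).inv)

end IsDAlgebraic

theorem not_algebraicIndependent_of_isAlgebraic_adjoin {ι : Type*} [Infinite ι] {x : ι → M}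
    {s : Set M} (hs : s.Finite) (hx : ∀ i, IsAlgebraic (adjoin F s) (x i)) :
    ¬ AlgebraicIndependent F x := by
  intro h
  have hindep : (AlgebraicIndependent.matroid F M).Indep (Set.range x) :=
    AlgebraicIndependent.matroid_indep_iff.2 h.coe_range
  have hclosure : Set.range x ⊆ (AlgebraicIndependent.matroid F M).closure s := by
    rw [AlgebraicIndependent.matroid_closure_eq]
    exact Set.range_subset_iff.2 hx
  have hcard : (Set.range x).encard ≤ s.encard := by
    have hrank := hindep.encard_le_eRk_of_subset hclosure
    rw [Matroid.eRk_closure_eq] at hrank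
    exact hrank.trans (Matroid.eRk_le_encard _ s)
  exact (Set.infinite_range_of_injective h.injective)
    (Set.encard_lt_top_iff.1 (hcard.trans_lt hs.encard_lt_top))

theorem IsDAlgebraic.not_algebraicIndependent {D : Derivation F M M} {a : M}
    (ha : IsDAlgebraic D a) : ¬ AlgebraicIndependent F fun n ↦ D^[n] a := by
  obtain ⟨s, hs, has⟩ := ha
  exact not_algebraicIndependent_of_isAlgebraic_adjoin hs has

theorem exists_isAlgebraic_adjoin_image_Iio {x : ℕ → M} (hx : ¬ AlgebraicIndependent F x) :
    ∃ n, IsAlgebraic (adjoin F (x '' Set.Iio n)) (x n) := by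
  contrapose! hx
  have hIio (n : ℕ) : AlgebraicIndepOn F x (Set.Iio n) := by
    induction n with
    | zero =>
      have : IsEmpty (Set.Iio 0) := by simp
      exact algebraicIndependent_empty_type_iff.2 (algebraMap F M).injective
    | succ n ih =>
      rw [← Order.succ_eq_add_one, Order.Iio_succ_eq_insert]
      exact (AlgebraicIndepOn.insert_iff Set.self_notMem_Iio).2 ⟨ih, hx n⟩
  refine algebraicIndependent_of_finite_type fun t ht ↦ ?_
  obtain ⟨n, hn⟩ := ht.bddAbove
  exact (hIio (n + 1)).mono fun i hi ↦ Nat.lt_succ_of_le (hn hi)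

theorem transcendental_of_derivation_eq_one [CharZero F] {D : Derivation F M M} {z : M}
    (hz : D z = 1) : Transcendental F z := fun halg ↦ by
  obtain ⟨p, hp, hp'⟩ := exists_aeval_eq_zero_aeval_derivative_ne_zero halg
  have hD := D.map_aeval p z
  rw [hp, map_zero, hz, smul_eq_mul, mul_one] at hD
  exact hp' hD.symm

/-- The sequence `z, k, D k, D² k, …`. -/
def jet (D : M → M) (z k : M) : ℕ → M
  | 0 => z
  | n + 1 => D^[n] k

theorem isDAlgebraic_of_not_algebraicIndependent_jet [CharZero F] {D : Derivation F M M} {z k : M}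
    (hz : D z = 1) (hk : ¬ AlgebraicIndependent F (jet D z k)) : IsDAlgebraic D k := by
  obtain ⟨n, hn⟩ := exists_isAlgebraic_adjoin_image_Iio hk
  have hn0 : n ≠ 0 := by
    rintro rfl
    have hempty : jet D z k '' Set.Iio 0 = ∅ := by simp
    rw [hempty, adjoin_empty] at hn
    exact transcendental_of_derivation_eq_one hz (Subalgebra.isAlgebraic_of_isAlgebraic_bot hn)
  have hle (j : ℕ) (hj : j ≤ n) :
      IsAlgebraic (adjoin F (jet D z k '' Set.Iio n)) (jet D z k j) := by
    obtain hj | rfl := hj.lt_or_eq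
    · exact isAlgebraic_adjoin_of_mem (subset_adjoin ⟨j, hj, rfl⟩)
    · exact hn
  refine ⟨_, (Set.finite_Iio n).image _,
    isAlgebraic_derivation_iterate ?_ (hle 1 (Nat.one_le_iff_ne_zero.2 hn0))⟩
  rintro _ ⟨_ | j, hj, rfl⟩
  · exact hz.symm ▸ isAlgebraic_one
  · exact Function.iterate_succ_apply' D j k ▸ hle (j + 2) hj

end IsDAlgebraic

section AffineShift

open MvPolynomial
open scoped MonomialOrder

variable {k ι : Type*} [Field k] (σ : k →+* k) (r : ι → k)

/-- The ring endomorphism of `k[Yᵢ]` acting as `σ` on coefficients and as `Yᵢ ↦ Yᵢ + rᵢ` on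
variables. -/
noncomputable def affineShift : MvPolynomial ι k →+* MvPolynomial ι k :=
  eval₂Hom (C.comp σ) fun i ↦ X i + C (r i)

@[simp]
theorem affineShift_C (a : k) : affineShift σ r (C a) = C (σ a) := by
  simp [affineShift]

@[simp]
theorem affineShift_X (i : ι) : affineShift σ r (X i) = X i + C (r i) := by
  simp [affineShift]

theorem pderiv_affineShift (i : ι) (Q : MvPolynomial ι k) :
    pderiv i (affineShift σ r Q) = affineShift σ r (pderiv i Q) := by
  classical
  induction Q using MvPolynomial.induction_on with
  | C a => simp
  | add P Q hP hQ => simp only [map_add, hP, hQ]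
  | mul_X P j hP =>
    obtain rfl | hij := eq_or_ne j i
    · simp [hP]
    · simp [hP, hij]

variable {σ r}

theorem aeval_affineShift {R : Type*} [CommRing R] [Algebra k R] {τ : R →+* R}
    (hτ : ∀ a, τ (algebraMap k R a) = algebraMap k R (σ a)) {y : ι → R}
    (hy : ∀ i, τ (y i) = y i + algebraMap k R (r i)) (Q : MvPolynomial ι k) :
    aeval y (affineShift σ r Q) = τ (aeval y Q) := by
  induction Q using MvPolynomial.induction_on with
  | C a => simp [hτ]
  | add P Q hP hQ => simp only [map_add, hP, hQ]
  | mul_X P j hP => simp [hP, hy]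

variable {m : MonomialOrder ι}

theorem coeff_affineShift_monomial {a b : ι →₀ ℕ} (hab : a ≼[m] b) (c : k) :
    (affineShift σ r (monomial a c)).coeff b = σ ((monomial a c).coeff b) := by
  classical
  let P : MvPolynomial ι k := ∏ i ∈ a.support, (X i + C (r i)) ^ a i
  have hshift : affineShift σ r (monomial a c) = C (σ c) * P := by
    simp [affineShift, eval₂Hom_monomial, Finsupp.prod, P]
  have hmonic : m.Monic P := MonomialOrder.Monic.prod fun i _ ↦ (m.monic_X_add_C i (r i)).pow
  have hdegree : m.degree P = a := by
    rw [m.degree_prod fun i _ ↦ ((m.monic_X_add_C i (r i)).pow).ne_zero]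
    simp only [m.degree_pow, m.degree_X_add_C, Finsupp.smul_single, smul_eq_mul, mul_one]
    exact a.sum_single
  rw [hshift, coeff_C_mul, coeff_monomial]
  split_ifs with h
  · rw [← h, ← hdegree, hmonic.coeff_degree, mul_one]
  · have hlt : m.degree P ≺[m] b :=
      hdegree.symm ▸ lt_of_le_of_ne hab fun h' ↦ h (m.toSyn.injective h')
    rw [m.coeff_eq_zero_of_lt hlt, mul_zero, map_zero]

theorem coeff_affineShift_of_degree_le {Q : MvPolynomial ι k} {b : ι →₀ ℕ}
    (hb : m.degree Q ≼[m] b) : (affineShift σ r Q).coeff b = σ (Q.coeff b) := by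
  conv_lhs => rw [Q.as_sum, map_sum, coeff_sum]
  conv_rhs => rw [Q.as_sum, coeff_sum, map_sum]
  exact Finset.sum_congr rfl fun a ha ↦ coeff_affineShift_monomial ((m.le_degree ha).trans hb) _

theorem degree_affineShift_sub_self_lt {Q : MvPolynomial ι k} (hQ : m.Monic Q)
    (hne : affineShift σ r Q ≠ Q) : m.degree (affineShift σ r Q - Q) ≺[m] m.degree Q := by
  by_contra! hle
  have hlead := m.coeff_degree_ne_zero_iff.2 (sub_ne_zero.2 hne)
  rw [coeff_sub, coeff_affineShift_of_degree_le hle] at hlead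
  obtain heq | hlt := hle.eq_or_lt
  · rw [← m.toSyn.injective heq, hQ.coeff_degree, map_one, sub_self] at hlead
    exact hlead rfl
  · rw [m.coeff_eq_zero_of_lt hlt, map_zero, sub_self] at hlead
    exact hlead rfl

theorem exists_monic_mem_degree_eq {I : Ideal (MvPolynomial ι k)} {P : MvPolynomial ι k}
    (hPI : P ∈ I) (hP : P ≠ 0) : ∃ Q ∈ I, m.Monic Q ∧ m.degree Q = m.degree P := by
  have hlc : m.leadingCoeff P ≠ 0 := m.leadingCoeff_ne_zero_iff.2 hP
  refine ⟨C (m.leadingCoeff P)⁻¹ * P, I.mul_mem_left _ hPI, ?_, ?_⟩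
  · rw [MonomialOrder.Monic, m.leadingCoeff_mul, m.leadingCoeff_C, inv_mul_cancel₀ hlc]
  · rw [m.degree_mul (by simpa using hlc) hP, m.degree_C, zero_add]

theorem exists_mem_affineShift_eq_self (m : MonomialOrder ι) {I : Ideal (MvPolynomial ι k)}
    (hI : I ≠ ⊥) (hshift : ∀ Q ∈ I, affineShift σ r Q ∈ I) :
    ∃ Q ∈ I, Q ≠ 0 ∧ affineShift σ r Q = Q := by
  let monics : Set (MvPolynomial ι k) := {Q | Q ∈ I ∧ m.Monic Q}
  obtain ⟨P, hPI, hP⟩ := Submodule.exists_mem_ne_zero_of_ne_bot hI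
  have hne : monics.Nonempty :=
    let ⟨Q, hQI, hQ, _⟩ := exists_monic_mem_degree_eq (m := m) hPI hP
    ⟨Q, hQI, hQ⟩
  let degSyn : MvPolynomial ι k → m.syn := fun Q ↦ m.toSyn (m.degree Q)
  let Q := Function.argminOn degSyn monics hne
  obtain ⟨hQI, hQ⟩ : Q ∈ monics := Function.argminOn_mem degSyn monics hne
  refine ⟨Q, hQI, hQ.ne_zero, ?_⟩
  by_contra hQσ
  obtain ⟨W, hWI, hW, hdeg⟩ := exists_monic_mem_degree_eq (m := m)
    (I.sub_mem (hshift Q hQI) hQI) (sub_ne_zero.2 hQσ)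
  have hmin : m.degree Q ≼[m] m.degree W := Function.argminOn_le degSyn monics ⟨hWI, hW⟩
  exact hmin.not_gt (hdeg ▸ degree_affineShift_sub_self_lt hQ hQσ)

end AffineShift

section Pderiv

open MvPolynomial

variable {R ι : Type*} [CommRing R]

theorem totalDegree_pderiv_le (Q : MvPolynomial ι R) (i : ι) :
    (pderiv i Q).totalDegree ≤ Q.totalDegree - 1 := by
  refine Finset.sup_le fun b hb ↦ Nat.le_sub_one_of_lt ?_
  have hb' : b + Finsupp.single i 1 ∈ Q.support := by
    rw [mem_support_iff, coeff_pderiv] at hb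
    exact mem_support_iff.2 (left_ne_zero_of_mul hb)
  refine lt_of_lt_of_le ?_ (le_totalDegree hb')
  rw [Finsupp.sum_add_index' (by simp) (by simp)]
  simp

variable [NoZeroDivisors R] [CharZero R]

theorem eq_of_pderiv_eq {P Q : MvPolynomial ι R} (h₀ : P.coeff 0 = Q.coeff 0)
    (h : ∀ i, pderiv i P = pderiv i Q) : P = Q := by
  ext b
  obtain rfl | hb := eq_or_ne b 0
  · exact h₀
  · obtain ⟨i, hi⟩ := Finsupp.ne_iff.1 hb
    have hcoeff := congrArg (coeff (b - Finsupp.single i 1)) (h i)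
    rw [coeff_pderiv, coeff_pderiv, tsub_add_cancel_of_le
      (by simpa [Nat.one_le_iff_ne_zero] using hi)] at hcoeff
    exact mul_right_cancel₀ (Nat.cast_add_one_ne_zero _) hcoeff

theorem eq_C_add_sum_C_mul_X_of_pderiv_eq_C [Fintype ι] {Q : MvPolynomial ι R} {c : ι → R}
    (hc : ∀ i, pderiv i Q = C (c i)) : Q = C (Q.coeff 0) + ∑ i, C (c i) * X i := by
  classical
  refine eq_of_pderiv_eq (by simp [coeff_sum, coeff_zero_X]) fun i ↦ ?_
  simp [hc, pderiv_X, Pi.single_apply]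

end Pderiv

section AdditiveKolchin

open MvPolynomial

variable {k ι : Type*} [Field k] {σ : k →+* k} {r : ι → k}

theorem exists_affineShift_eq_self_forall_pderiv_eq_C {P : MvPolynomial ι k}
    (hP : P.totalDegree ≠ 0) (hPσ : affineShift σ r P = P) :
    ∃ (Q : MvPolynomial ι k) (c : ι → k), Q.totalDegree ≠ 0 ∧ affineShift σ r Q = Q ∧
      ∀ i, pderiv i Q = C (c i) := by
  let invariants : Set (MvPolynomial ι k) := {Q | Q.totalDegree ≠ 0 ∧ affineShift σ r Q = Q}
  have hne : invariants.Nonempty := ⟨P, hP, hPσ⟩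
  let Q := Function.argminOn totalDegree invariants hne
  obtain ⟨hQ, hQσ⟩ : Q ∈ invariants := Function.argminOn_mem _ invariants hne
  have hpderiv (i : ι) : (pderiv i Q).totalDegree = 0 := by
    by_contra hi
    have hmin : Q.totalDegree ≤ (pderiv i Q).totalDegree :=
      Function.argminOn_le _ invariants ⟨hi, by rw [← pderiv_affineShift, hQσ]⟩
    have := totalDegree_pderiv_le Q i
    omega
  exact ⟨Q, fun i ↦ (pderiv i Q).coeff 0, hQ, hQσ, fun i ↦
    totalDegree_eq_zero_iff_eq_C.1 (hpderiv i)⟩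

variable [CharZero k]

theorem exists_sum_eq_sub_of_affineShift_eq_self [Fintype ι] {P : MvPolynomial ι k}
    (hP : P.totalDegree ≠ 0) (hPσ : affineShift σ r P = P) :
    ∃ (c : ι → k) (g : k), c ≠ 0 ∧ (∀ i, σ (c i) = c i) ∧ ∑ i, c i * r i = g - σ g := by
  obtain ⟨Q, c, hQ, hQσ, hc⟩ := exists_affineShift_eq_self_forall_pderiv_eq_C hP hPσ
  have haffine := eq_C_add_sum_C_mul_X_of_pderiv_eq_C hc
  have hfixed (i : ι) : σ (c i) = c i := by
    have h := pderiv_affineShift σ r i Q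
    rw [hQσ, hc, affineShift_C] at h
    exact (C_injective ι k h).symm
  refine ⟨c, Q.coeff 0, ?_, hfixed, ?_⟩
  · rintro rfl
    rw [haffine] at hQ
    simp at hQ
  · have h := congrArg constantCoeff hQσ
    rw [haffine] at h
    simp only [map_add, map_sum, map_mul, affineShift_C, affineShift_X, constantCoeff_C,
      constantCoeff_X, hfixed, zero_add, mul_zero, Finset.sum_const_zero, add_zero] at h
    linear_combination h

theorem exists_sum_eq_sub_of_not_algebraicIndependent [Fintype ι] {R : Type*} [CommRing R]
    [Nontrivial R] [Algebra k R] {τ : R →+* R}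
    (hτ : ∀ a, τ (algebraMap k R a) = algebraMap k R (σ a)) {y : ι → R}
    (hy : ∀ i, τ (y i) = y i + algebraMap k R (r i)) (hdep : ¬ AlgebraicIndependent k y) :
    ∃ (c : ι → k) (g : k), c ≠ 0 ∧ (∀ i, σ (c i) = c i) ∧ ∑ i, c i * r i = g - σ g := by
  let : LinearOrder ι := LinearOrder.lift' (Fintype.equivFin ι) (Fintype.equivFin ι).injective
  have hker : RingHom.ker (aeval (R := k) y) ≠ ⊥ := fun h ↦
    hdep ((RingHom.injective_iff_ker_eq_bot _).2 h)
  have hshift : ∀ Q ∈ RingHom.ker (aeval (R := k) y),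
      affineShift σ r Q ∈ RingHom.ker (aeval (R := k) y) := fun Q hQ ↦ by
    rw [RingHom.mem_ker] at hQ ⊢
    rw [aeval_affineShift hτ hy, hQ, map_zero]
  obtain ⟨Q, hQy, hQ, hQσ⟩ := exists_mem_affineShift_eq_self MonomialOrder.lex hker hshift
  refine exists_sum_eq_sub_of_affineShift_eq_self (fun hdeg ↦ ?_) hQσ
  rw [totalDegree_eq_zero_iff_eq_C.1 hdeg] at hQ hQy
  simp_all [RingHom.mem_ker]

/-- The additive case of Kolchin's theorem on algebraic dependence, for difference fields. -/
theorem algebraicIndependent_of_forall_sum_eq_sub {R : Type*} [CommRing R] [Nontrivial R]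
    [Algebra k R] {τ : R →+* R} (hτ : ∀ a, τ (algebraMap k R a) = algebraMap k R (σ a))
    {y : ι → R} (hy : ∀ i, τ (y i) = y i + algebraMap k R (r i))
    (hr : ∀ (s : Finset ι) (c : s → k) (g : k), (∀ i, σ (c i) = c i) →
      ∑ i, c i * r i = g - σ g → c = 0) :
    AlgebraicIndependent k y := by
  refine algebraicIndependent_of_finite_type fun t ht ↦ ?_
  lift t to Finset ι using ht
  by_contra hdep
  obtain ⟨c, g, hc, hfixed, hsum⟩ :=
    exists_sum_eq_sub_of_not_algebraicIndependent hτ (fun i : t ↦ hy i) hdep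
  exact hc (hr t c g hfixed hsum)

end AdditiveKolchin

section RationalFunctions

open Polynomial

variable {F : Type*} [Field F]

theorem eq_C_of_taylor_one_eq_self [CharZero F] {p : F[X]} (hp : taylor 1 p = p) :
    p = C (p.eval 0) := by
  have heval (n : ℕ) : p.eval (n : F) = p.eval 0 := by
    induction n with
    | zero => rw [Nat.cast_zero]
    | succ n ih => rw [Nat.cast_succ, ← taylor_eval, hp, ih]
  refine eq_of_infinite_eval_eq _ _ ((Set.infinite_range_of_injective Nat.cast_injective).mono ?_)
  rintro _ ⟨n, rfl⟩
  simp [heval]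

/-- The automorphism `f(X) ↦ f(X + 1)` of the field of rational functions. -/
noncomputable def ratFuncShift (F : Type*) [Field F] : RatFunc F ≃ₐ[F] RatFunc F :=
  IsFractionRing.algEquivOfAlgEquiv (taylorEquiv (1 : F))

@[simp]
theorem ratFuncShift_algebraMap (p : F[X]) :
    ratFuncShift F (algebraMap F[X] (RatFunc F) p) = algebraMap F[X] (RatFunc F) (taylor 1 p) :=
  IsFractionRing.algEquivOfAlgEquiv_algebraMap _ p

theorem ratFuncShift_eq_div (g : RatFunc F) :
    ratFuncShift F g = algebraMap F[X] (RatFunc F) (taylor 1 g.num) /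
      algebraMap F[X] (RatFunc F) (taylor 1 g.denom) := by
  conv_lhs => rw [← g.num_div_denom]
  simp only [map_div₀, ratFuncShift_algebraMap]

theorem exists_eq_algebraMap_of_ratFuncShift_eq_self [CharZero F] {g : RatFunc F}
    (hg : ratFuncShift F g = g) : ∃ a : F, g = algebraMap F (RatFunc F) a := by
  have hcross : taylor 1 g.num * g.denom = g.num * taylor 1 g.denom := by
    rw [ratFuncShift_eq_div, div_eq_iff (by simp [g.denom_ne_zero])] at hg
    nth_rw 2 [← g.num_div_denom] at hg
    rw [div_mul_eq_mul_div, eq_div_iff (by simp [g.denom_ne_zero]), ← map_mul, ← map_mul] at hg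
    exact RatFunc.algebraMap_injective F hg
  have hdvd : g.denom ∣ taylor 1 g.denom :=
    g.isCoprime_num_denom.symm.dvd_of_dvd_mul_left ⟨_, by rw [← hcross, mul_comm]⟩
  have hdenom : taylor 1 g.denom = g.denom :=
    eq_of_monic_of_dvd_of_natDegree_le g.monic_denom (g.monic_denom.comp_X_add_C 1) hdvd
      (natDegree_taylor _ _).le
  have hnum : taylor 1 g.num = g.num :=
    mul_right_cancel₀ g.denom_ne_zero (hcross.trans (by rw [hdenom]))
  refine ⟨g.num.eval 0 / g.denom.eval 0, ?_⟩
  rw [map_div₀, RatFunc.algebraMap_eq_C, ← RatFunc.algebraMap_C, ← RatFunc.algebraMap_C,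
    ← eq_C_of_taylor_one_eq_self hnum, ← eq_C_of_taylor_one_eq_self hdenom, g.num_div_denom]

theorem eval_intCast_ne_zero_of_telescoping [CharZero F] {p q u : F[X]} {N : ℕ}
    (hpq : IsCoprime p q) (hq : q ≠ 0)
    (h : u * (q * taylor 1 q) = X ^ N * (p * taylor 1 q - taylor 1 p * q)) (n : ℤ) :
    q.eval (n : F) ≠ 0 := by
  have heval (x : F) : u.eval x * (q.eval x * q.eval (x + 1)) =
      x ^ N * (p.eval x * q.eval (x + 1) - p.eval (x + 1) * q.eval x) := by
    simpa [taylor_eval] using congrArg (Polynomial.eval x) h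
  have hp (x : F) (hx : q.eval x = 0) : p.eval x ≠ 0 := fun hx' ↦ by
    obtain ⟨a, b, hab⟩ := hpq
    simpa [hx, hx'] using congrArg (Polynomial.eval x) hab
  -- The largest integer pole `s` of `p / q` and the shift `t - 1` of the smallest one are poles of
  -- `p / q - taylor 1 p / taylor 1 q = u / X ^ N`, which has no pole but `0`.
  let poles : Set ℤ := {m | q.IsRoot (m : F)}
  have hfin : poles.Finite :=
    (finite_setOfPred_isRoot hq).preimage Int.cast_injective.injOn
  intro hn
  obtain ⟨s, hs : q.eval (s : F) = 0, hmax⟩ := Set.exists_max_image poles id hfin ⟨n, hn⟩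
  obtain ⟨t, ht : q.eval (t : F) = 0, hmin⟩ := Set.exists_min_image poles id hfin ⟨n, hn⟩
  have hs0 : s = 0 := by
    have hs' : q.eval ((s : F) + 1) ≠ 0 := fun h' ↦ by
      have := hmax (s + 1) (by simpa [poles] using h')
      simp at this
    have := heval s
    rw [hs] at this
    by_contra hs0
    simp [hs0, hp _ hs, hs'] at this
  have ht1 : t = 1 := by
    have ht' : q.eval ((t : F) - 1) ≠ 0 := fun h' ↦ by
      have := hmin (t - 1) (by simpa [poles] using h')
      simp at this
    have := heval (t - 1)
    rw [sub_add_cancel, ht] at this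
    by_contra ht1
    simp [sub_eq_zero, ht1, hp _ ht, ht'] at this
  have : t ≤ s := hmax t ht
  omega

theorem X_pow_dvd_of_div_X_pow_eq_sub_ratFuncShift [CharZero F] {u : F[X]} {N : ℕ}
    {g : RatFunc F}
    (h : algebraMap F[X] (RatFunc F) u / RatFunc.X ^ N = g - ratFuncShift F g) :
    X ^ N ∣ u := by
  have hcross : u * (g.denom * taylor 1 g.denom) =
      X ^ N * (g.num * taylor 1 g.denom - taylor 1 g.num * g.denom) := by
    rw [ratFuncShift_eq_div] at h
    nth_rw 1 [← g.num_div_denom] at h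
    rw [div_sub_div _ _ (by simp [g.denom_ne_zero]) (by simp [g.denom_ne_zero]),
      div_eq_div_iff (pow_ne_zero N RatFunc.X_ne_zero) (by simp [g.denom_ne_zero]),
      ← RatFunc.algebraMap_X] at h
    apply RatFunc.algebraMap_injective F
    simp only [map_mul, map_sub, map_pow]
    linear_combination h
  have hroot := eval_intCast_ne_zero_of_telescoping g.isCoprime_num_denom g.denom_ne_zero hcross
  have hX : ¬ X ∣ g.denom * taylor 1 g.denom := by
    rw [X_dvd_iff, coeff_zero_eq_eval_zero, eval_mul, taylor_eval, zero_add]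
    exact mul_ne_zero (mod_cast hroot 0) (mod_cast hroot 1)
  have hcoprime : IsCoprime (X ^ N) (g.denom * taylor 1 g.denom) :=
    ((prime_X.irreducible.coprime_iff_not_dvd).2 hX).pow_left
  exact hcoprime.dvd_of_dvd_mul_right ⟨_, hcross⟩

theorem eq_zero_of_inv_X_mul_aeval_inv_X_eq_sub_ratFuncShift [CharZero F] {p : F[X]}
    {g : RatFunc F}
    (h : RatFunc.X⁻¹ * aeval (RatFunc.X⁻¹ : RatFunc F) p = g - ratFuncShift F g) : p = 0 := by
  have hreverse : aeval (RatFunc.X⁻¹ : RatFunc F) p =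
      algebraMap F[X] (RatFunc F) p.reverse / RatFunc.X ^ p.natDegree := by
    let : Invertible (RatFunc.X⁻¹ : RatFunc F) :=
      invertibleOfNonzero (inv_ne_zero RatFunc.X_ne_zero)
    rw [aeval_def, ← eval₂_reverse_mul_pow, invOf_eq_inv, inv_inv, ← aeval_def,
      RatFunc.aeval_X_left_eq_algebraMap, inv_pow, div_eq_mul_inv]
  rw [hreverse, inv_mul_eq_div, div_div, ← pow_succ] at h
  have hdvd := X_pow_dvd_of_div_X_pow_eq_sub_ratFuncShift h
  by_contra hp
  have hle := natDegree_le_of_dvd hdvd (by simpa using hp)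
  rw [natDegree_X_pow] at hle
  exact (hle.trans (reverse_natDegree_le p)).not_gt p.natDegree.lt_succ_self

theorem eq_zero_of_sum_mul_inv_X_pow_eq_sub_ratFuncShift [CharZero F] {s : Finset ℕ} {w : ℕ → F}
    (hw : ∀ n, w n ≠ 0) {c : s → RatFunc F} {g : RatFunc F}
    (hc : ∀ i, ratFuncShift F (c i) = c i)
    (h : ∑ i, c i * (algebraMap F (RatFunc F) (w i) * RatFunc.X⁻¹ ^ (i + 1 : ℕ)) =
      g - ratFuncShift F g) : c = 0 := by
  choose a ha using fun i ↦ exists_eq_algebraMap_of_ratFuncShift_eq_self (hc i)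
  let p : F[X] := ∑ i : s, monomial (i : ℕ) (a i * w i)
  have hp : p = 0 := by
    refine eq_zero_of_inv_X_mul_aeval_inv_X_eq_sub_ratFuncShift (Eq.trans ?_ h)
    simp only [p, map_sum, aeval_monomial, Finset.mul_sum, map_mul, ha]
    exact Finset.sum_congr rfl fun i _ ↦ by ring
  funext i
  have hcoeff : a i * w i = 0 := by
    have := congrArg (coeff · (i : ℕ)) hp
    simpa [p, coeff_monomial, Subtype.coe_inj] using this
  rw [ha, (mul_eq_zero.1 hcoeff).resolve_right (hw i), map_zero, Pi.zero_apply]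

end RationalFunctions

section GammaEquation

open Polynomial

variable {F M : Type*} [Field F] [Field M] [Algebra F M]

theorem derivation_iterate_inv {D : Derivation F M M} {w : M} (hw : D w = 1) (n : ℕ) :
    D^[n] w⁻¹ = algebraMap F M ((-1) ^ n * n.factorial) * w⁻¹ ^ (n + 1) := by
  induction n with
  | zero => simp
  | succ n ih =>
    have hpow : D (w⁻¹ ^ (n + 1)) = -(n + 1) * w⁻¹ ^ (n + 2) := by
      rw [D.leibniz_pow, D.leibniz_inv, hw]
      simp only [nsmul_eq_mul, smul_eq_mul, Nat.add_sub_cancel]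
      push_cast
      ring
    rw [Function.iterate_succ_apply', ih, ← Algebra.smul_def, D.map_smul, hpow,
      Algebra.smul_def, Nat.factorial_succ]
    simp only [map_mul, map_pow, map_neg, map_one, map_natCast, Nat.cast_mul]
    push_cast
    ring

variable {w : M}

/-- The embedding of `F(X)` into an extension of `F` sending `X` to a transcendental element. -/
noncomputable def ratFuncEmbedding (hw : Transcendental F w) : RatFunc F →ₐ[F] M :=
  IsFractionRing.liftAlgHom (g := aeval w) (transcendental_iff_injective.1 hw)

theorem ratFuncEmbedding_algebraMap (hw : Transcendental F w) (p : F[X]) :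
    ratFuncEmbedding hw (algebraMap F[X] (RatFunc F) p) = aeval w p :=
  IsFractionRing.lift_algebraMap (transcendental_iff_injective.1 hw) p

theorem ratFuncEmbedding_X (hw : Transcendental F w) : ratFuncEmbedding hw RatFunc.X = w := by
  rw [← RatFunc.algebraMap_X, ratFuncEmbedding_algebraMap, aeval_X]

theorem map_ratFuncEmbedding {τ : M →ₐ[F] M} (hw : Transcendental F w) (hτw : τ w = w + 1)
    (q : RatFunc F) : τ (ratFuncEmbedding hw q) = ratFuncEmbedding hw (ratFuncShift F q) := by
  suffices τ.comp (ratFuncEmbedding hw) =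
      (ratFuncEmbedding hw).comp (ratFuncShift F : RatFunc F →ₐ[F] RatFunc F) from
    DFunLike.congr_fun this q
  refine IsLocalization.algHom_ext (nonZeroDivisors F[X]) (Polynomial.algHom_ext ?_)
  change τ (ratFuncEmbedding hw (algebraMap F[X] (RatFunc F) X)) =
    ratFuncEmbedding hw (ratFuncShift F (algebraMap F[X] (RatFunc F) X))
  simp only [ratFuncShift_algebraMap, ratFuncEmbedding_algebraMap, taylor_X, map_add, aeval_X,
    map_one, hτw]

variable {D : Derivation F M M} {τ : M →ₐ[F] M} {g : M}

theorem map_logDeriv_of_map_eq_mul (hτ : ∀ x, D (τ x) = τ (D x)) (hw : D w = 1) (hw0 : w ≠ 0)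
    (hg : g ≠ 0) (hτg : τ g = w * g) : τ (D g / g) = D g / g + w⁻¹ := by
  rw [map_div₀, ← hτ, hτg, D.leibniz, hw]
  simp only [smul_eq_mul, mul_one]
  field_simp

theorem map_derivation_iterate_of_map_eq_add {a b : M} (hτ : ∀ x, D (τ x) = τ (D x))
    (ha : τ a = a + b) (n : ℕ) : τ (D^[n] a) = D^[n] a + D^[n] b := by
  have hcomm : Function.Semiconj τ D D := fun x ↦ (hτ x).symm
  rw [(hcomm.iterate_right n).eq a, ha, iterate_map_add]

variable [CharZero F]

theorem algebraicIndependent_derivation_iterate_of_map_eq_add_inv {a : M}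
    (hτ : ∀ x, D (τ x) = τ (D x)) (hw : D w = 1) (hτw : τ w = w + 1) (ha : τ a = a + w⁻¹) :
    AlgebraicIndependent F fun n ↦ D^[n] a := by
  have htr := transcendental_of_derivation_eq_one hw
  algebraize [(ratFuncEmbedding htr).toRingHom]
  have htower : IsScalarTower F (RatFunc F) M :=
    .of_algebraMap_eq fun x ↦ ((ratFuncEmbedding htr).commutes x).symm
  let r (n : ℕ) : RatFunc F :=
    algebraMap F (RatFunc F) ((-1) ^ n * n.factorial) * RatFunc.X⁻¹ ^ (n + 1)
  have hr (n : ℕ) : D^[n] w⁻¹ = algebraMap (RatFunc F) M (r n) := by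
    change _ = ratFuncEmbedding htr (r n)
    rw [derivation_iterate_inv hw, map_mul (ratFuncEmbedding htr), AlgHom.commutes, map_pow _ _⁻¹,
      map_inv₀, ratFuncEmbedding_X]
  have hindep : AlgebraicIndependent (RatFunc F) fun n ↦ D^[n] a :=
    algebraicIndependent_of_forall_sum_eq_sub (σ := (ratFuncShift F : RatFunc F →+* RatFunc F))
      (τ := (τ : M →+* M)) (map_ratFuncEmbedding htr hτw)
      (fun n ↦ hr n ▸ map_derivation_iterate_of_map_eq_add hτ ha n)
      fun s c q hc h ↦ eq_zero_of_sum_mul_inv_X_pow_eq_sub_ratFuncShift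
        (w := fun n ↦ (-1) ^ n * (n.factorial : F)) (by simp [Nat.factorial_ne_zero]) hc h
  exact hindep.restrictScalars (algebraMap F (RatFunc F)).injective

theorem not_isDAlgebraic_of_map_eq_mul (hτ : ∀ x, D (τ x) = τ (D x)) (hw : D w = 1)
    (hτw : τ w = w + 1) (hg : g ≠ 0) (hτg : τ g = w * g) : ¬ IsDAlgebraic D g := fun h ↦ by
  have hw0 : w ≠ 0 := by
    rintro rfl
    simp at hw
  exact h.logDeriv.not_algebraicIndependent
    (algebraicIndependent_derivation_iterate_of_map_eq_add_inv hτ hw hτw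
      (map_logDeriv_of_map_eq_mul hτ hw hw0 hg hτg))

end GammaEquation

section Codiscrete

open Filter Topology

theorem tendsto_codiscrete_of_continuous_injective {X Y : Type*} [TopologicalSpace X]
    [TopologicalSpace Y] {f : X → Y} (hf : Continuous f) (hinj : f.Injective) :
    Tendsto f (codiscrete X) (codiscrete Y) := fun s hs ↦ by
  simp only [codiscrete, mem_codiscreteWithin_iff_forall_mem_nhdsNE, Set.mem_univ, true_imp_iff,
    Set.compl_univ, Set.union_empty, mem_map] at hs ⊢
  exact fun x ↦ (tendsto_nhdsWithin_of_tendsto_nhds_of_eventually_within f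
    (hf.continuousAt.mono_left nhdsWithin_le_nhds)
    (eventually_mem_nhdsWithin.mono fun _ hy ↦ hinj.ne hy)) (hs (f x))

theorem nhdsNE_le_codiscrete {X : Type*} [TopologicalSpace X] (x : X) :
    𝓝[≠] x ≤ codiscrete X :=
  le_iSup₂_of_le x (Set.mem_univ x) (Set.compl_eq_univ_sdiff {x} ▸ le_rfl)

variable {𝕜 : Type*} [NontriviallyNormedField 𝕜] {f g : 𝕜 → 𝕜}

theorem eventually_codiscrete_ne_zero [PreconnectedSpace 𝕜] (hf : Meromorphic f)
    (hf0 : ¬ f =ᶠ[codiscrete 𝕜] 0) : ∀ᶠ z in codiscrete 𝕜, f z ≠ 0 := by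
  have hf' := meromorphicOn_univ.2 hf
  refine hf'.eventually_codiscreteWithin_apply_ne_zero fun x hx htop ↦ hf0 ?_
  have hall (y : 𝕜) : meromorphicOrderAt f y = ⊤ := by
    by_contra hy
    exact hf'.meromorphicOrderAt_ne_top_of_isPreconnected isPreconnected_univ
      (Set.mem_univ y) hx hy htop
  rw [EventuallyEq, Filter.Eventually, codiscrete, mem_codiscreteWithin_iff_forall_mem_nhdsNE]
  exact fun y _ ↦ mem_of_superset (meromorphicOrderAt_eq_top_iff.1 (hall y)) (by simp)

variable [CompleteSpace 𝕜]

theorem eventually_codiscrete_analyticAt (hf : Meromorphic f) :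
    ∀ᶠ z in codiscrete 𝕜, AnalyticAt 𝕜 f z :=
  (meromorphicOn_univ.2 hf).eventually_codiscreteWithin_analyticAt f

theorem deriv_add_eventuallyEq_codiscrete (hf : Meromorphic f) (hg : Meromorphic g) :
    deriv (f + g) =ᶠ[codiscrete 𝕜] deriv f + deriv g := by
  filter_upwards [eventually_codiscrete_analyticAt hf, eventually_codiscrete_analyticAt hg]
    with z hfz hgz using deriv_add hfz.differentiableAt hgz.differentiableAt

theorem deriv_mul_eventuallyEq_codiscrete (hf : Meromorphic f) (hg : Meromorphic g) :
    deriv (f * g) =ᶠ[codiscrete 𝕜] f * deriv g + g * deriv f := by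
  filter_upwards [eventually_codiscrete_analyticAt hf, eventually_codiscrete_analyticAt hg]
    with z hfz hgz
  rw [deriv_mul hfz.differentiableAt hgz.differentiableAt]
  simp only [Pi.add_apply, Pi.mul_apply]
  ring

end Codiscrete

section MeromorphicField

open Filter Topology

/-- The `ℂ`-algebra of functions meromorphic on `ℂ`, with arbitrary values at the poles. -/
def meromorphicSubalgebra : Subalgebra ℂ (ℂ → ℂ) where
  carrier := {f | Meromorphic f}
  mul_mem' hf hg := hf.mul hg
  add_mem' hf hg := hf.add hg
  algebraMap_mem' c := Meromorphic.const c

/-- The meromorphic functions vanishing off a closed discrete set, which have to be divided out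
because the values at the poles are arbitrary. -/
noncomputable def negligibleIdeal : Ideal meromorphicSubalgebra :=
  RingHom.ker ((Germ.coeRingHom (codiscrete ℂ)).comp meromorphicSubalgebra.val.toRingHom)

theorem mem_negligibleIdeal {f : meromorphicSubalgebra} :
    f ∈ negligibleIdeal ↔ (f : ℂ → ℂ) =ᶠ[codiscrete ℂ] 0 :=
  Germ.coe_eq

instance : negligibleIdeal.IsMaximal := by
  refine Ideal.isMaximal_iff.2 ⟨fun h ↦ ?_, fun J f hJ hf hfJ ↦ ?_⟩
  · obtain ⟨_, hz⟩ := ((mem_negligibleIdeal.1 h).filter_mono (nhdsNE_le_codiscrete 0)).exists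
    exact one_ne_zero hz
  · have hinv : 1 - ⟨(f : ℂ → ℂ)⁻¹, f.2.inv⟩ * f ∈ negligibleIdeal := by
      rw [mem_negligibleIdeal]
      filter_upwards [eventually_codiscrete_ne_zero f.2 (mt mem_negligibleIdeal.2 hf)] with z hz
      simp [hz]
    rw [← sub_add_cancel 1 (⟨(f : ℂ → ℂ)⁻¹, f.2.inv⟩ * f)]
    exact J.add_mem (hJ hinv) (J.mul_mem_left _ hfJ)

/-- The field of meromorphic functions on `ℂ`. -/
abbrev MeromorphicField : Type := meromorphicSubalgebra ⧸ negligibleIdeal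

noncomputable instance : Field MeromorphicField := Ideal.Quotient.field negligibleIdeal

namespace MeromorphicField

/-- The class of a meromorphic function in the field of meromorphic functions. -/
noncomputable def mk (f : ℂ → ℂ) (hf : Meromorphic f) : MeromorphicField :=
  Ideal.Quotient.mk negligibleIdeal ⟨f, hf⟩

variable {f g : ℂ → ℂ} {hf : Meromorphic f} {hg : Meromorphic g}

theorem mk_eq_mk_iff : mk f hf = mk g hg ↔ f =ᶠ[codiscrete ℂ] g := by
  rw [mk, mk, Ideal.Quotient.mk_eq_mk_iff_sub_mem, mem_negligibleIdeal]
  exact eventuallyEq_iff_sub.symm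

/-- Differentiation on the field of meromorphic functions. -/
noncomputable def derivation : Derivation ℂ MeromorphicField MeromorphicField :=
  Derivation.mk'
    { toFun := Quotient.lift (fun f : meromorphicSubalgebra ↦ mk (deriv f) f.2.deriv) fun f g hfg ↦
        mk_eq_mk_iff.2 <| (meromorphicOn_univ.2 f.2).deriv_eventuallyEq_codiscreteWithin
          (meromorphicOn_univ.2 g.2) (mk_eq_mk_iff.1 (Quotient.sound hfg))
      map_add' := by
        rintro ⟨f⟩ ⟨g⟩
        exact mk_eq_mk_iff.2 (deriv_add_eventuallyEq_codiscrete f.2 g.2)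
      map_smul' := by
        rintro c ⟨f⟩
        exact mk_eq_mk_iff.2 (.of_forall fun z ↦ deriv_const_smul_field c f.1) }
    (by
      rintro ⟨f⟩ ⟨g⟩
      exact mk_eq_mk_iff.2 (deriv_mul_eventuallyEq_codiscrete f.2 g.2))

theorem derivation_mk (hf : Meromorphic f) : derivation (mk f hf) = mk (deriv f) hf.deriv :=
  rfl

/-- Translation of the argument, `f ↦ f (· + c)`, on the algebra of meromorphic functions. -/
def translate (c : ℂ) : meromorphicSubalgebra →ₐ[ℂ] meromorphicSubalgebra where
  toFun f := ⟨fun z ↦ (f : ℂ → ℂ) (z + c),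
    Meromorphic.meromorphic_fun_comp_add_const_iff_meromorphic.2 f.2⟩
  map_one' := rfl
  map_mul' _ _ := rfl
  map_zero' := rfl
  map_add' _ _ := rfl
  commutes' _ := rfl

/-- Translation of the argument, `f ↦ f (· + c)`, on the field of meromorphic functions. -/
noncomputable def shift (c : ℂ) : MeromorphicField →ₐ[ℂ] MeromorphicField :=
  Ideal.quotientMapₐ negligibleIdeal (translate c) fun _ hf ↦
    mem_negligibleIdeal.2 ((mem_negligibleIdeal.1 hf).comp_tendsto
      (tendsto_codiscrete_of_continuous_injective (continuous_add_const c) (add_left_injective c)))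

theorem derivation_shift (c : ℂ) (x : MeromorphicField) :
    derivation (shift c x) = shift c (derivation x) := by
  obtain ⟨f, rfl⟩ := Ideal.Quotient.mk_surjective x
  exact mk_eq_mk_iff.2 (.of_forall fun z ↦ deriv_comp_add_const ..)

theorem derivation_iterate_mk (hf : Meromorphic f) (n : ℕ) : derivation^[n] (mk f hf) =
    mk (iteratedDeriv n f) (iteratedDeriv_eq_iterate (f := f) ▸ hf.iterated_deriv) := by
  induction n with
  | zero => simp only [Function.iterate_zero_apply, iteratedDeriv_zero]
  | succ n ih => simp only [Function.iterate_succ_apply', ih, derivation_mk, iteratedDeriv_succ]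

theorem mk_ne_zero_of_continuousAt (hf : Meromorphic f) {z : ℂ} (hz : ContinuousAt f z)
    (hfz : f z ≠ 0) : mk f hf ≠ 0 := fun h ↦ by
  have hzero : f =ᶠ[𝓝[≠] z] 0 :=
    (mk_eq_mk_iff (hg := .const 0).1 h).filter_mono (nhdsNE_le_codiscrete z)
  have hne : ∀ᶠ w in 𝓝[≠] z, f w ≠ 0 := (hz.eventually_ne hfz).filter_mono nhdsWithin_le_nhds
  obtain ⟨w, hw0, hw⟩ := (hzero.and hne).exists
  exact hw hw0

/-- The identity function `z`. -/
noncomputable def coord : MeromorphicField := mk id fun _ ↦ .id _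

theorem derivation_coord : derivation coord = 1 :=
  mk_eq_mk_iff.2 (.of_forall deriv_id)

theorem shift_coord (c : ℂ) : shift c coord = coord + algebraMap ℂ MeromorphicField c :=
  rfl

theorem shift_one_Gamma :
    shift 1 (mk Complex.Gamma .Gamma) = coord * mk Complex.Gamma .Gamma := by
  refine mk_eq_mk_iff.2 ?_
  filter_upwards [(Set.finite_singleton (0 : ℂ)).compl_mem_codiscrete] with z hz
    using Complex.Gamma_add_one z hz

theorem not_isDAlgebraic_Gamma : ¬ IsDAlgebraic derivation (mk Complex.Gamma .Gamma) := by
  have hΓ : mk Complex.Gamma .Gamma ≠ 0 := by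
    refine mk_ne_zero_of_continuousAt _ Complex.differentiableAt_Gamma_one.continuousAt ?_
    rw [Complex.Gamma_one]
    exact one_ne_zero
  exact not_isDAlgebraic_of_map_eq_mul (derivation_shift 1) derivation_coord
    (by simp [shift_coord]) hΓ shift_one_Gamma

theorem aeval_mk_eq_zero {ι : Type*} {f : ι → ℂ → ℂ} (hf : ∀ i, Meromorphic (f i))
    {P : MvPolynomial ι ℂ} (hP : ∀ᶠ z in codiscrete ℂ, MvPolynomial.eval (f · z) P = 0) :
    MvPolynomial.aeval (fun i ↦ mk (f i) (hf i)) P = 0 := by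
  let x (i : ι) : meromorphicSubalgebra := ⟨f i, hf i⟩
  have hx (z : ℂ) : (MvPolynomial.aeval x P : ℂ → ℂ) z = MvPolynomial.eval (f · z) P :=
    MvPolynomial.comp_aeval_apply x
      ((Pi.evalAlgHom ℂ (fun _ : ℂ ↦ ℂ) z).comp meromorphicSubalgebra.val) P
  have hcomp := MvPolynomial.comp_aeval_apply x (Ideal.Quotient.mkₐ ℂ negligibleIdeal) P
  refine hcomp.symm.trans (Ideal.Quotient.eq_zero_iff_mem.2 (mem_negligibleIdeal.2 ?_))
  filter_upwards [hP] with z hz using (hx z).trans hz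

theorem exists_jet_coord_mk_eq (hf : Meromorphic f) (i : ℕ) :
    ∃ h : Meromorphic fun z ↦ if i = 0 then z else iteratedDeriv (i - 1) f z,
      jet derivation coord (mk f hf) i = mk _ h := by
  cases i with
  | zero => exact ⟨fun _ ↦ .id _, rfl⟩
  | succ n => exact ⟨_, derivation_iterate_mk hf n⟩

theorem isDAlgebraic_mk_of_differentiallyAlgebraic (hf : Meromorphic f)
    (halg : DifferentiallyAlgebraic f) : IsDAlgebraic derivation (mk f hf) := by
  obtain ⟨n, P, hP, hPf⟩ := halg
  refine isDAlgebraic_of_not_algebraicIndependent_jet derivation_coord fun hindep ↦ hP ?_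
  choose hmero hjet using exists_jet_coord_mk_eq hf
  have hrel : MvPolynomial.aeval (fun i : Fin (n + 2) ↦ mk _ (hmero i)) P = 0 :=
    aeval_mk_eq_zero _ ((eventually_codiscrete_analyticAt hf).mono hPf)
  simp only [← hjet] at hrel
  exact (hindep.comp _ Fin.val_injective).eq_zero_of_aeval_eq_zero P hrel

theorem mk_sub_shift_neg_one {K : ℂ → ℂ} (hK : Meromorphic K)
    (hfe : ∀ z : ℂ, AnalyticAt ℂ K z → AnalyticAt ℂ K (z - 1) →
      AnalyticAt ℂ Complex.Gamma z → K z - K (z - 1) = Complex.Gamma z) :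
    mk K hK - shift (-1) (mk K hK) = mk Complex.Gamma .Gamma := by
  have htranslate : Tendsto (· - (1 : ℂ)) (codiscrete ℂ) (codiscrete ℂ) :=
    tendsto_codiscrete_of_continuous_injective (continuous_sub_right 1) sub_left_injective
  refine mk_eq_mk_iff.2 ?_
  filter_upwards [eventually_codiscrete_analyticAt hK,
    htranslate.eventually (eventually_codiscrete_analyticAt hK),
    eventually_codiscrete_analyticAt Meromorphic.Gamma] with z hz hz1 hΓ
    using hfe z hz hz1 hΓ

end MeromorphicField

end MeromorphicField

/-- Every function meromorphic on ℂ satisfying the Kurepa functional equation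
`K z - K (z-1) = Γ z` (wherever all three terms are analytic) is differentially
transcendental. -/
theorem kurepa_diffTranscendental (K : ℂ → ℂ)
    (hmero : MeromorphicOn K Set.univ)
    (hfe : ∀ z : ℂ, AnalyticAt ℂ K z → AnalyticAt ℂ K (z - 1) →
      AnalyticAt ℂ Complex.Gamma z → K z - K (z - 1) = Complex.Gamma z) :
    ¬ DifferentiallyAlgebraic K := by
  intro halg
  have hK : Meromorphic K := meromorphicOn_univ.1 hmero
  have hKalg : IsDAlgebraic MeromorphicField.derivation (.mk K hK) :=
    MeromorphicField.isDAlgebraic_mk_of_differentiallyAlgebraic hK halg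
  have hΓalg : IsDAlgebraic MeromorphicField.derivation (.mk Complex.Gamma .Gamma) :=
    MeromorphicField.mk_sub_shift_neg_one hK hfe ▸
      hKalg.sub (hKalg.map (MeromorphicField.derivation_shift (-1)))
  exact MeromorphicField.not_isDAlgebraic_Gamma hΓalg
end
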